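/- arXiv:math/0606054 — 7 statements merged into one kernel-verified Lean document; each statement's English description precedes it below -/
import Mathlib

section
/- Let V be a 2n-dimensional real inner product space with compatible complex structure J, and let Q be a J-invariant symmetric bilinear form on V. Then the Ricci contraction of E_Q satisfies, for every orthonormal basis (e_1, …, e_{2n}) of V and all Y, Z in V: Σ_{i=1}^{2n} g(E_Q(e_i, Y)Z, e_i) = 2(n+2) Q(Y,Z) + (tr_g Q) g(Y,Z), where tr_g Q = Σ_i Q(e_i, e_i). -/
open RealInnerProductSpace

/-- The Ricci contraction of `E_Q` equals `2(n+2) Q + (tr_g Q) g`. -/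
theorem eQ_ricci_contraction
    (n : ℕ) (hn : 1 ≤ n)
    {V : Type*} [NormedAddCommGroup V] [InnerProductSpace ℝ V] [FiniteDimensional ℝ V]
    (hdim : Module.finrank ℝ V = 2 * n)
    (J : V →ₗ[ℝ] V)
    (hJiso : ∀ X Y : V, ⟪J X, J Y⟫ = ⟪X, Y⟫)
    (hJJ : ∀ X : V, J (J X) = -X)
    (Q : V →ₗ[ℝ] V →ₗ[ℝ] ℝ)
    (hQsymm : ∀ X Y : V, Q X Y = Q Y X)
    (hQJ : ∀ X Y : V, Q (J X) (J Y) = Q X Y)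
    (Qhat : V →ₗ[ℝ] V)
    (hQhat : ∀ X Y : V, ⟪Qhat X, Y⟫ = Q X Y)
    (E : V → V → V → V)
    (hE : ∀ X Y Z : V, E X Y Z =
      Q Y Z • X - Q X Z • Y + ⟪Y, Z⟫ • Qhat X - ⟪X, Z⟫ • Qhat Y
        + Q (J Y) Z • J X - Q (J X) Z • J Y - (2 * Q (J X) Y) • J Z
        + ⟪J Y, Z⟫ • J (Qhat X) - ⟪J X, Z⟫ • J (Qhat Y)
        - (2 * ⟪J X, Y⟫) • J (Qhat Z))
    (e : OrthonormalBasis (Fin (2 * n)) ℝ V) :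
    ∀ Y Z : V, ∑ i, ⟪E (e i) Y Z, e i⟫ =
      2 * ((n : ℝ) + 2) * Q Y Z + (∑ i, Q (e i) (e i)) * ⟪Y, Z⟫ := by
  intro Y Z
  have key : ∀ (f : V →ₗ[ℝ] ℝ) (W : V), ∑ i, f (e i) * ⟪W, e i⟫ = f W := by
    intro f W
    conv_rhs => rw [← e.sum_repr' W]
    rw [map_sum]
    refine Finset.sum_congr rfl fun i _ => ?_
    rw [map_smul, smul_eq_mul, real_inner_comm, mul_comm]
  have hJskew : ∀ X : V, ⟪J X, X⟫ = 0 := by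
    intro X
    have h := hJiso (J X) X
    rw [hJJ, inner_neg_left, real_inner_comm] at h
    linarith
  have hJskew' : ∀ X W : V, ⟪J X, W⟫ = - ⟪X, J W⟫ := by
    intro X W
    have h := hJiso X (J W)
    rw [hJJ, inner_neg_right] at h
    linarith
  have hQskew : ∀ X : V, Q X (J X) = 0 := by
    intro X
    have h := hQJ X (J X)
    rw [hJJ, map_neg, hQsymm] at h
    linarith
  have h8 : ∀ X : V, ⟪J (Qhat X), X⟫ = 0 := by
    intro X
    rw [hJskew', hQhat, hQskew, neg_zero]
  have k2 := key (Q.flip Z) Y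
  have k4 := key (innerₗ V Z) (Qhat Y)
  have k6 := key (Q.flip Z ∘ₗ J) (J Y)
  have k7 := key (Q.flip Y ∘ₗ J) (J Z)
  have k9 := key (innerₗ V Z ∘ₗ J) (J (Qhat Y))
  have k10 := key (innerₗ V Y ∘ₗ J) (J (Qhat Z))
  simp only [LinearMap.flip_apply, LinearMap.comp_apply, innerₗ_apply_apply, hJJ, map_neg,
    LinearMap.neg_apply, inner_neg_right] at k2 k4 k6 k7 k9 k10
  rw [real_inner_comm, hQhat] at k4 k9 k10
  rw [hQsymm Z Y] at k7 k10
  have hterm : ∀ i, ⟪E (e i) Y Z, e i⟫ =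
      Q Y Z - Q (e i) Z * ⟪Y, e i⟫ + Q (e i) (e i) * ⟪Y, Z⟫ - ⟪Z, e i⟫ * ⟪Qhat Y, e i⟫
      - Q (J (e i)) Z * ⟪J Y, e i⟫ - 2 * (Q (J (e i)) Y * ⟪J Z, e i⟫)
      - ⟪Z, J (e i)⟫ * ⟪J (Qhat Y), e i⟫ - 2 * (⟪Y, J (e i)⟫ * ⟪J (Qhat Z), e i⟫) := by
    intro i
    have h1 : ⟪e i, e i⟫ = 1 := by simp
    rw [hE]
    simp only [inner_add_left, inner_sub_left, real_inner_smul_left, hJskew, h8, h1]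
    rw [hQhat (e i) (e i), real_inner_comm (e i) Z, real_inner_comm (J (e i)) Z,
      real_inner_comm (J (e i)) Y]
    ring
  simp only [hterm, Finset.sum_add_distrib, Finset.sum_sub_distrib, ← Finset.mul_sum,
    ← Finset.sum_mul, k2, k4, k6, k7, k9, k10]
  simp
  ring
end

section
/- Let V be a 2n-dimensional real inner product space with compatible complex structure J. The assignment Q ↦ E_Q is injective on J-invariant symmetric bilinear forms: if Q₁ and Q₂ are J-invariant symmetric bilinear forms on V with E_{Q₁}(X,Y)Z = E_{Q₂}(X,Y)Z for all X, Y, Z in V, then Q₁ = Q₂. -/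
open RealInnerProductSpace

theorem eQ_hol {V : Type*} [NormedAddCommGroup V] [InnerProductSpace ℝ V]
    (J : V →ₗ[ℝ] V)
    (hJiso : ∀ X Y : V, ⟪J X, J Y⟫ = ⟪X, Y⟫)
    (hJJ : ∀ X : V, J (J X) = -X)
    (Q : V →ₗ[ℝ] V →ₗ[ℝ] ℝ)
    (hs : ∀ X Y : V, Q X Y = Q Y X)
    (hJ : ∀ X Y : V, Q (J X) (J Y) = Q X Y)
    (A : V →ₗ[ℝ] V)
    (hA : ∀ X Y : V, ⟪A X, Y⟫ = Q X Y)
    (E : V → V → V → V)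
    (hE : ∀ X Y Z : V, E X Y Z =
      Q Y Z • X - Q X Z • Y + ⟪Y, Z⟫ • A X - ⟪X, Z⟫ • A Y
        + Q (J Y) Z • J X - Q (J X) Z • J Y - (2 * Q (J X) Y) • J Z
        + ⟪J Y, Z⟫ • J (A X) - ⟪J X, Z⟫ • J (A Y)
        - (2 * ⟪J X, Y⟫) • J (A Z)) (X : V) :
    ⟪E X (J X) (J X), X⟫ = 8 * (Q X X * ⟪X, X⟫) := by
  have hadj : ∀ U W : V, ⟪J U, W⟫ = -⟪U, J W⟫ := by
    intro U W
    have h := hJiso U (J W)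
    rw [hJJ, inner_neg_right] at h
    linarith
  have h0 : ⟪X, J X⟫ = 0 := by
    have h := hadj X X
    rw [real_inner_comm] at h
    linarith
  have hq0 : Q X (J X) = 0 := by
    have h := hJ X (J X)
    rw [hJJ, map_neg, hs (J X) X] at h
    linarith
  have hq1 : ⟪J (A (J X)), X⟫ = - Q X X := by
    rw [hadj, hA, hJ]
  have h1 : ⟪J X, X⟫ = 0 := by rw [real_inner_comm]; exact h0
  rw [hE]
  simp only [inner_add_left, inner_sub_left, real_inner_smul_left, hJJ, hJ, hJiso, h0, h1, hq0, hq1,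
    hA, map_neg, LinearMap.neg_apply, inner_neg_left]
  ring

/-- The assignment `Q ↦ E_Q` is injective on `J`-invariant symmetric
bilinear forms. -/
theorem eQ_injective
    (n : ℕ) (hn : 1 ≤ n)
    {V : Type*} [NormedAddCommGroup V] [InnerProductSpace ℝ V] [FiniteDimensional ℝ V]
    (hdim : Module.finrank ℝ V = 2 * n)
    (J : V →ₗ[ℝ] V)
    (hJiso : ∀ X Y : V, ⟪J X, J Y⟫ = ⟪X, Y⟫)
    (hJJ : ∀ X : V, J (J X) = -X)
    (Q₁ Q₂ : V →ₗ[ℝ] V →ₗ[ℝ] ℝ)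
    (hQ₁symm : ∀ X Y : V, Q₁ X Y = Q₁ Y X)
    (hQ₁J : ∀ X Y : V, Q₁ (J X) (J Y) = Q₁ X Y)
    (hQ₂symm : ∀ X Y : V, Q₂ X Y = Q₂ Y X)
    (hQ₂J : ∀ X Y : V, Q₂ (J X) (J Y) = Q₂ X Y)
    (Qhat₁ Qhat₂ : V →ₗ[ℝ] V)
    (hQhat₁ : ∀ X Y : V, ⟪Qhat₁ X, Y⟫ = Q₁ X Y)
    (hQhat₂ : ∀ X Y : V, ⟪Qhat₂ X, Y⟫ = Q₂ X Y)
    (E₁ E₂ : V → V → V → V)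
    (hE₁ : ∀ X Y Z : V, E₁ X Y Z =
      Q₁ Y Z • X - Q₁ X Z • Y + ⟪Y, Z⟫ • Qhat₁ X - ⟪X, Z⟫ • Qhat₁ Y
        + Q₁ (J Y) Z • J X - Q₁ (J X) Z • J Y - (2 * Q₁ (J X) Y) • J Z
        + ⟪J Y, Z⟫ • J (Qhat₁ X) - ⟪J X, Z⟫ • J (Qhat₁ Y)
        - (2 * ⟪J X, Y⟫) • J (Qhat₁ Z))
    (hE₂ : ∀ X Y Z : V, E₂ X Y Z =
      Q₂ Y Z • X - Q₂ X Z • Y + ⟪Y, Z⟫ • Qhat₂ X - ⟪X, Z⟫ • Qhat₂ Y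
        + Q₂ (J Y) Z • J X - Q₂ (J X) Z • J Y - (2 * Q₂ (J X) Y) • J Z
        + ⟪J Y, Z⟫ • J (Qhat₂ X) - ⟪J X, Z⟫ • J (Qhat₂ Y)
        - (2 * ⟪J X, Y⟫) • J (Qhat₂ Z))
    (hEq : ∀ X Y Z : V, E₁ X Y Z = E₂ X Y Z) :
    Q₁ = Q₂ := by
  have hd : ∀ X : V, Q₁ X X = Q₂ X X := by
    intro X
    by_cases hX : X = 0
    · simp [hX]
    have h₁ := eQ_hol J hJiso hJJ Q₁ hQ₁symm hQ₁J Qhat₁ hQhat₁ E₁ hE₁ X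
    have h₂ := eQ_hol J hJiso hJJ Q₂ hQ₂symm hQ₂J Qhat₂ hQhat₂ E₂ hE₂ X
    rw [hEq, h₂] at h₁
    have hne : ⟪X, X⟫ ≠ 0 := by simpa using hX
    apply mul_right_cancel₀ hne
    linarith
  ext X Y
  have h := hd (X + Y)
  simp only [map_add, LinearMap.add_apply] at h
  linarith [hd X, hd Y, hQ₁symm X Y, hQ₂symm X Y]
end

section
/- (Algebraic core of Yano's theorem.) Let V be a 2n-dimensional real inner product space with compatible complex structure J, and let R be a (1,3)-tensor on V such that R = E_Q for SOME J-invariant symmetric bilinear form Q on V. Define ρ(Y,Z) := Σ_i g(R(e_i,Y)Z, e_i) for an orthonormal basis (e_i) and τ := Σ_i ρ(e_i,e_i). Then necessarily Q(Y,Z) = ρ(Y,Z)/(2(n+2)) − τ g(Y,Z)/(8(n+1)(n+2)) for all Y, Z; consequently the Bochner tensor of R, defined as B(R) := R − E_{Q₀} with Q₀ := ρ/(2(n+2)) − (τ/(8(n+1)(n+2))) g, vanishes identically. -/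
open RealInnerProductSpace

/-- (Algebraic core of Yano's theorem.) If `R = E_Q` for some `J`-invariant
symmetric bilinear form `Q`, then `Q = ρ/(2(n+2)) − τ g/(8(n+1)(n+2))` where `ρ`, `τ` are the
Ricci contraction and scalar trace of `R`; consequently the Bochner tensor
`B(R) = R − E_{Q₀}` vanishes identically. -/
theorem bochner_vanishes_of_eq_eQ
    (n : ℕ) (hn : 1 ≤ n)
    {V : Type*} [NormedAddCommGroup V] [InnerProductSpace ℝ V] [FiniteDimensional ℝ V]
    (hdim : Module.finrank ℝ V = 2 * n)
    (J : V →ₗ[ℝ] V)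
    (hJiso : ∀ X Y : V, ⟪J X, J Y⟫ = ⟪X, Y⟫)
    (hJJ : ∀ X : V, J (J X) = -X)
    (R : V → V → V → V)
    (Q : V →ₗ[ℝ] V →ₗ[ℝ] ℝ)
    (hQsymm : ∀ X Y : V, Q X Y = Q Y X)
    (hQJ : ∀ X Y : V, Q (J X) (J Y) = Q X Y)
    (Qhat : V →ₗ[ℝ] V)
    (hQhat : ∀ X Y : V, ⟪Qhat X, Y⟫ = Q X Y)
    (hR : ∀ X Y Z : V, R X Y Z =
      Q Y Z • X - Q X Z • Y + ⟪Y, Z⟫ • Qhat X - ⟪X, Z⟫ • Qhat Y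
        + Q (J Y) Z • J X - Q (J X) Z • J Y - (2 * Q (J X) Y) • J Z
        + ⟪J Y, Z⟫ • J (Qhat X) - ⟪J X, Z⟫ • J (Qhat Y)
        - (2 * ⟪J X, Y⟫) • J (Qhat Z))
    (e : OrthonormalBasis (Fin (2 * n)) ℝ V)
    (ρ : V → V → ℝ)
    (hρ : ∀ Y Z : V, ρ Y Z = ∑ i, ⟪R (e i) Y Z, e i⟫)
    (τ : ℝ)
    (hτ : τ = ∑ i, ρ (e i) (e i)) :
    (∀ Y Z : V, Q Y Z =
        ρ Y Z / (2 * ((n : ℝ) + 2)) - τ * ⟪Y, Z⟫ / (8 * ((n : ℝ) + 1) * ((n : ℝ) + 2)))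
    ∧ (∀ (Q₀ : V → V → ℝ) (Q₀hat : V →ₗ[ℝ] V),
        (∀ Y Z : V, Q₀ Y Z =
          ρ Y Z / (2 * ((n : ℝ) + 2)) - τ * ⟪Y, Z⟫ / (8 * ((n : ℝ) + 1) * ((n : ℝ) + 2))) →
        (∀ X Y : V, ⟪Q₀hat X, Y⟫ = Q₀ X Y) →
        ∀ X Y Z : V,
          R X Y Z -
            (Q₀ Y Z • X - Q₀ X Z • Y + ⟪Y, Z⟫ • Q₀hat X - ⟪X, Z⟫ • Q₀hat Y
              + Q₀ (J Y) Z • J X - Q₀ (J X) Z • J Y - (2 * Q₀ (J X) Y) • J Z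
              + ⟪J Y, Z⟫ • J (Q₀hat X) - ⟪J X, Z⟫ • J (Q₀hat Y)
              - (2 * ⟪J X, Y⟫) • J (Q₀hat Z)) = 0) := by
  have key : ∀ (f : V →ₗ[ℝ] ℝ) (v : V), ∑ i, f (e i) * ⟪v, e i⟫ = f v := by
    intro f v
    conv_rhs => rw [← e.sum_repr' v]
    simp [map_sum, mul_comm, real_inner_comm]
  have hskew : ∀ X Y : V, ⟪J X, Y⟫ = -⟪X, J Y⟫ := by
    intro X Y
    rw [← hJiso X (J Y), hJJ, inner_neg_right, neg_neg]
  have hJ0 : ∀ X : V, ⟪J X, X⟫ = 0 := by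
    intro X
    have h := hskew X X
    rw [real_inner_comm (J X) X] at h
    linarith
  have hQ0 : ∀ X : V, Q X (J X) = 0 := by
    intro X
    have h := hQJ X (J X)
    rw [hJJ, map_neg, hQsymm (J X) X] at h
    linarith
  have hone : ∀ i, ⟪e i, e i⟫ = (1 : ℝ) := by
    intro i
    simp
  have hric : ∀ Y Z : V, ρ Y Z = (2 * (n : ℝ) + 4) * Q Y Z + (∑ i, Q (e i) (e i)) * ⟪Y, Z⟫ := by
    intro Y Z
    have h2 := key (Q.flip Z) Y
    have h4 := key (innerₗ V Z) (Qhat Y)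
    have h6 := key (Q.flip Z ∘ₗ J) (J Y)
    have h7 := key (Q.flip Y ∘ₗ J) (J Z)
    have h9 := key (innerₗ V Z ∘ₗ J) (J (Qhat Y))
    have h10 := key (innerₗ V Y ∘ₗ J) (J (Qhat Z))
    simp only [LinearMap.comp_apply, LinearMap.flip_apply, innerₗ_apply_apply, hJJ, map_neg,
      LinearMap.neg_apply, inner_neg_right] at h2 h4 h6 h7 h9 h10
    rw [real_inner_comm, hQhat] at h4 h9 h10
    have hterm : ∀ i, ⟪R (e i) Y Z, e i⟫ = Q Y Z - Q (e i) Z * ⟪Y, e i⟫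
        + Q (e i) (e i) * ⟪Y, Z⟫ - ⟪Z, e i⟫ * ⟪Qhat Y, e i⟫
        - Q (J (e i)) Z * ⟪J Y, e i⟫ - 2 * (Q (J (e i)) Y * ⟪J Z, e i⟫)
        - ⟪Z, J (e i)⟫ * ⟪J (Qhat Y), e i⟫
        - 2 * (⟪Y, J (e i)⟫ * ⟪J (Qhat Z), e i⟫) := by
      intro i
      have h8 : ⟪J (Qhat (e i)), e i⟫ = 0 := by
        rw [hskew, hQhat, hQ0, neg_zero]
      rw [hR]
      simp only [inner_add_left, inner_sub_left, real_inner_smul_left, h8, hJ0, hone]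
      rw [hQhat (e i) (e i), real_inner_comm Z (e i), real_inner_comm Z (J (e i)),
        real_inner_comm Y (J (e i))]
      ring
    rw [hρ, Finset.sum_congr rfl (fun i _ => hterm i)]
    simp only [Finset.sum_add_distrib, Finset.sum_sub_distrib, ← Finset.mul_sum,
      ← Finset.sum_mul, h2, h4, h6, h7, h9, h10]
    simp only [Finset.sum_const, Finset.card_univ, Fintype.card_fin, nsmul_eq_mul]
    rw [hQsymm Z Y]
    push_cast
    ring
  have ht : τ = 4 * ((n : ℝ) + 1) * ∑ i, Q (e i) (e i) := by
    rw [hτ]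
    simp only [hric, hone, Finset.sum_add_distrib, ← Finset.mul_sum]
    simp only [Finset.sum_const, Finset.card_univ, Fintype.card_fin, nsmul_eq_mul]
    push_cast
    ring
  have hmain : ∀ Y Z : V, Q Y Z =
        ρ Y Z / (2 * ((n : ℝ) + 2)) - τ * ⟪Y, Z⟫ / (8 * ((n : ℝ) + 1) * ((n : ℝ) + 2)) := by
    intro Y Z
    rw [hric, ht]
    have h1 : (n : ℝ) + 1 ≠ 0 := by positivity
    have h2 : (n : ℝ) + 2 ≠ 0 := by positivity
    field_simp
    ring
  refine ⟨hmain, ?_⟩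
  intro Q₀ Q₀hat hQ₀ hhat X Y Z
  have hq : ∀ Y Z : V, Q₀ Y Z = Q Y Z := fun Y Z => by rw [hQ₀, ← hmain]
  have hh : ∀ X, Q₀hat X = Qhat X := by
    intro X
    refine ext_inner_right ℝ fun v => ?_
    rw [hhat, hQhat, hq]
  simp only [hq, hh]
  rw [hR, sub_self]
end

section
/- Let V be a 2n-dimensional real inner product space with compatible complex structure J, let ξ be a unit vector with η(X) := g(ξ,X), let c be a real number, and set ω := c·η. Define the J-invariant symmetric bilinear form L(X,Y) := ω(X)ω(Y) + ω(JX)ω(JY) + (1/2)c² g(X,Y). Then E_L = 4c² (π + 2Φ), where 4π(X,Y)Z := g(Y,Z)X − g(X,Z)Y − 2g(JX,Y)JZ + g(JY,Z)JX − g(JX,Z)JY, and 8Φ(X,Y)Z := g(Y,Z)(η(X)ξ − η(JX)Jξ) − g(X,Z)(η(Y)ξ − η(JY)Jξ) + g(JY,Z)(η(X)Jξ + η(JX)ξ) − g(JX,Z)(η(Y)Jξ + η(JY)ξ) − 2g(JX,Y)(η(Z)Jξ + η(JZ)ξ) + (η(Y)η(Z) + η(JY)η(JZ))X − (η(X)η(Z)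 + η(JX)η(JZ))Y − (η(Y)η(JZ) − η(JY)η(Z))JX + (η(X)η(JZ) − η(JX)η(Z))JY + 2(η(X)η(JY) − η(JX)η(Y))JZ. -/
open RealInnerProductSpace

/-- With `ω = c·η` and
`L(X,Y) = ω(X)ω(Y) + ω(JX)ω(JY) + (1/2)c² g(X,Y)`, one has `E_L = 4c²(π + 2Φ)`. -/
theorem eL_eq_four_c_sq_pi_plus_two_Phi
    (n : ℕ) (hn : 1 ≤ n)
    {V : Type*} [NormedAddCommGroup V] [InnerProductSpace ℝ V] [FiniteDimensional ℝ V]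
    (hdim : Module.finrank ℝ V = 2 * n)
    (J : V →ₗ[ℝ] V)
    (hJiso : ∀ X Y : V, ⟪J X, J Y⟫ = ⟪X, Y⟫)
    (hJJ : ∀ X : V, J (J X) = -X)
    (ξ : V) (hξ : ‖ξ‖ = 1)
    (η : V → ℝ) (hη : ∀ X : V, η X = ⟪ξ, X⟫)
    (c : ℝ)
    (ω : V → ℝ) (hω : ∀ X : V, ω X = c * η X)
    (L : V → V → ℝ)
    (hL : ∀ X Y : V, L X Y = ω X * ω Y + ω (J X) * ω (J Y) + (1 / 2) * c ^ 2 * ⟪X, Y⟫)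
    (Lhat : V →ₗ[ℝ] V)
    (hLhat : ∀ X Y : V, ⟪Lhat X, Y⟫ = L X Y)
    (E : V → V → V → V)
    (hE : ∀ X Y Z : V, E X Y Z =
      L Y Z • X - L X Z • Y + ⟪Y, Z⟫ • Lhat X - ⟪X, Z⟫ • Lhat Y
        + L (J Y) Z • J X - L (J X) Z • J Y - (2 * L (J X) Y) • J Z
        + ⟪J Y, Z⟫ • J (Lhat X) - ⟪J X, Z⟫ • J (Lhat Y)
        - (2 * ⟪J X, Y⟫) • J (Lhat Z))
    (Pi Phi : V → V → V → V)
    (hPi : ∀ X Y Z : V, (4 : ℝ) • Pi X Y Z =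
      ⟪Y, Z⟫ • X - ⟪X, Z⟫ • Y - (2 * ⟪J X, Y⟫) • J Z
        + ⟪J Y, Z⟫ • J X - ⟪J X, Z⟫ • J Y)
    (hPhi : ∀ X Y Z : V, (8 : ℝ) • Phi X Y Z =
      ⟪Y, Z⟫ • (η X • ξ - η (J X) • J ξ)
        - ⟪X, Z⟫ • (η Y • ξ - η (J Y) • J ξ)
        + ⟪J Y, Z⟫ • (η X • J ξ + η (J X) • ξ)
        - ⟪J X, Z⟫ • (η Y • J ξ + η (J Y) • ξ)
        - (2 * ⟪J X, Y⟫) • (η Z • J ξ + η (J Z) • ξ)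
        + (η Y * η Z + η (J Y) * η (J Z)) • X
        - (η X * η Z + η (J X) * η (J Z)) • Y
        - (η Y * η (J Z) - η (J Y) * η Z) • J X
        + (η X * η (J Z) - η (J X) * η Z) • J Y
        + (2 * (η X * η (J Y) - η (J X) * η Y)) • J Z) :
    ∀ X Y Z : V, E X Y Z = (4 * c ^ 2) • (Pi X Y Z + (2 : ℝ) • Phi X Y Z) := by
  intro X Y Z
  have hadj : ∀ Y : V, ⟪J ξ, Y⟫ = -η (J Y) := by
    intro Y
    have h := hJiso ξ (J Y)
    rw [hJJ, inner_neg_right] at h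
    rw [hη]
    linarith
  have hneg : ∀ Y : V, η (-Y) = -η Y := by
    intro Y
    rw [hη, hη, inner_neg_right]
  have hLh : ∀ X : V, Lhat X
      = c ^ 2 • (η X • ξ - η (J X) • J ξ + (1 / 2 : ℝ) • X) := by
    intro X
    refine ext_inner_right ℝ fun Y => ?_
    rw [hLhat, hL, real_inner_smul_left, inner_add_left, inner_sub_left,
      real_inner_smul_left, real_inner_smul_left, real_inner_smul_left, hadj, ← hη Y,
      hω, hω, hω, hω]
    ring
  have hR : (4 * c ^ 2) • (Pi X Y Z + (2 : ℝ) • Phi X Y Z)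
      = c ^ 2 • ((4 : ℝ) • Pi X Y Z + (8 : ℝ) • Phi X Y Z) := by
    module
  rw [hR, hPi, hPhi, hE]
  simp only [hLh, hL, hω, hneg, map_add, map_sub, map_smul, hJJ]
  module
end

section
/- Let V be a 2n-dimensional real inner product space with compatible complex structure J, let ω be a covector on V with dual vector P (so g(P,X) = ω(X)), and set L(X,Y) := ω(X)ω(Y) + ω(JX)ω(JY) + (1/2)ω(P) g(X,Y). If R := −E_L, then for every orthonormal basis (e_i): the Ricci contraction ρ(Y,Z) := Σ_i g(R(e_i,Y)Z, e_i) equals −2(n+2){ω(Y)ω(Z) + ω(JY)ω(JZ) + ω(P) g(Y,Z)}, and the scalar trace τ := Σ_i ρ(e_i,e_i) equals −4(n+1)(n+2) ω(P). -/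
open RealInnerProductSpace

/-- For `R = −E_L` with
`L(X,Y) = ω(X)ω(Y) + ω(JX)ω(JY) + (1/2)ω(P)g(X,Y)`, the Ricci contraction equals
`−2(n+2){ω(Y)ω(Z) + ω(JY)ω(JZ) + ω(P)g(Y,Z)}` and the scalar trace equals
`−4(n+1)(n+2)ω(P)`. -/
theorem ricci_and_scalar_of_neg_eL
    (n : ℕ) (hn : 1 ≤ n)
    {V : Type*} [NormedAddCommGroup V] [InnerProductSpace ℝ V] [FiniteDimensional ℝ V]
    (hdim : Module.finrank ℝ V = 2 * n)
    (J : V →ₗ[ℝ] V)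
    (hJiso : ∀ X Y : V, ⟪J X, J Y⟫ = ⟪X, Y⟫)
    (hJJ : ∀ X : V, J (J X) = -X)
    (ω : V →ₗ[ℝ] ℝ) (P : V) (hP : ∀ X : V, ⟪P, X⟫ = ω X)
    (L : V → V → ℝ)
    (hL : ∀ X Y : V, L X Y = ω X * ω Y + ω (J X) * ω (J Y) + (1 / 2) * ω P * ⟪X, Y⟫)
    (Lhat : V →ₗ[ℝ] V)
    (hLhat : ∀ X Y : V, ⟪Lhat X, Y⟫ = L X Y)
    (E : V → V → V → V)
    (hE : ∀ X Y Z : V, E X Y Z =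
      L Y Z • X - L X Z • Y + ⟪Y, Z⟫ • Lhat X - ⟪X, Z⟫ • Lhat Y
        + L (J Y) Z • J X - L (J X) Z • J Y - (2 * L (J X) Y) • J Z
        + ⟪J Y, Z⟫ • J (Lhat X) - ⟪J X, Z⟫ • J (Lhat Y)
        - (2 * ⟪J X, Y⟫) • J (Lhat Z))
    (R : V → V → V → V)
    (hR : ∀ X Y Z : V, R X Y Z = - E X Y Z)
    (e : OrthonormalBasis (Fin (2 * n)) ℝ V)
    (ρ : V → V → ℝ)
    (hρ : ∀ Y Z : V, ρ Y Z = ∑ i, ⟪R (e i) Y Z, e i⟫)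
    (τ : ℝ)
    (hτ : τ = ∑ i, ρ (e i) (e i)) :
    (∀ Y Z : V, ρ Y Z =
        -2 * ((n : ℝ) + 2) * (ω Y * ω Z + ω (J Y) * ω (J Z) + ω P * ⟪Y, Z⟫))
    ∧ τ = -4 * ((n : ℝ) + 1) * ((n : ℝ) + 2) * ω P := by
  have key : ∀ (f : V →ₗ[ℝ] ℝ) (X : V), ∑ i, f (e i) * ⟪X, e i⟫ = f X := by
    intro f X
    conv_rhs => rw [← e.sum_repr' X, map_sum]
    refine Finset.sum_congr rfl fun i _ => ?_
    rw [map_smul, smul_eq_mul, real_inner_comm, mul_comm]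
  have hskew : ∀ X Y : V, ⟪J X, Y⟫ = -⟪X, J Y⟫ := by
    intro X Y
    rw [← hJiso X (J Y), hJJ, inner_neg_right, neg_neg]
  have hskew0 : ∀ X : V, ⟪J X, X⟫ = 0 := by
    intro X
    have h := hskew X X
    rw [real_inner_comm] at h
    rw [real_inner_comm]
    linarith
  have hee : ∀ i, ⟪e i, e i⟫ = (1 : ℝ) := by
    intro i
    rw [real_inner_self_eq_norm_sq, e.norm_eq_one]; norm_num
  have hωω : ∑ i, ω (e i) * ω (e i) = ω P := by
    rw [← key ω P]
    exact Finset.sum_congr rfl fun i _ => by rw [hP]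
  have hωJ : ∑ i, ω (J (e i)) * ω (J (e i)) = ω P := by
    have h := key (ω ∘ₗ J) (-(J P))
    simp only [LinearMap.comp_apply, map_neg, hJJ, neg_neg] at h
    rw [← h]
    refine Finset.sum_congr rfl fun i _ => ?_
    rw [inner_neg_left, hskew, neg_neg, hP]
  have htr : ∑ i, L (e i) (e i) = ((n : ℝ) + 2) * ω P := by
    simp only [hL, hee, Finset.sum_add_distrib, hωω, hωJ]
    simp
    ring
  have hsym : ∀ X Y, L X Y = L Y X := by
    intro X Y
    rw [hL, hL, real_inner_comm]; ring
  have hLneg : ∀ X Y, L (-X) Y = - L X Y := by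
    intro X Y
    rw [← hLhat, ← hLhat, map_neg, inner_neg_left]
  have hJL0 : ∀ X, ⟪J (Lhat X), X⟫ = 0 := by
    intro X
    rw [hskew, hLhat, hL, hJJ, map_neg, real_inner_comm, hskew0]; ring
  have kL : ∀ Z X : V, ∑ i, L (e i) Z * ⟪X, e i⟫ = L X Z := by
    intro Z X
    have h := key ((innerₗ V Z) ∘ₗ Lhat) X
    simpa only [LinearMap.comp_apply, innerₗ_apply_apply, real_inner_comm (Lhat _) Z, hLhat] using h
  have kLJ : ∀ Z X : V, ∑ i, L (J (e i)) Z * ⟪X, e i⟫ = L (J X) Z := by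
    intro Z X
    have h := key ((innerₗ V Z) ∘ₗ Lhat ∘ₗ J) X
    simpa only [LinearMap.comp_apply, innerₗ_apply_apply, real_inner_comm (Lhat _) Z, hLhat] using h
  have kg : ∀ Z X : V, ∑ i, ⟪e i, Z⟫ * ⟪X, e i⟫ = ⟪X, Z⟫ := by
    intro Z X
    have h := key (innerₗ V Z) X
    simpa only [innerₗ_apply_apply, real_inner_comm] using h
  have kgJ : ∀ Z X : V, ∑ i, ⟪J (e i), Z⟫ * ⟪X, e i⟫ = ⟪J X, Z⟫ := by
    intro Z X
    have h := key ((innerₗ V Z) ∘ₗ J) X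
    simpa only [LinearMap.comp_apply, innerₗ_apply_apply, real_inner_comm] using h
  have main : ∀ Y Z : V, ρ Y Z =
      -2 * ((n : ℝ) + 2) * (ω Y * ω Z + ω (J Y) * ω (J Z) + ω P * ⟪Y, Z⟫) := by
    intro Y Z
    rw [hρ]
    have hterm : ∀ i, ⟪R (e i) Y Z, e i⟫ = -(L Y Z * 1 - L (e i) Z * ⟪Y, e i⟫
        + ⟪Y, Z⟫ * L (e i) (e i) - ⟪e i, Z⟫ * ⟪Lhat Y, e i⟫
        - L (J (e i)) Z * ⟪J Y, e i⟫ - 2 * (L (J (e i)) Y * ⟪J Z, e i⟫)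
        - ⟪J (e i), Z⟫ * ⟪J (Lhat Y), e i⟫
        - 2 * (⟪J (e i), Y⟫ * ⟪J (Lhat Z), e i⟫)) := by
      intro i
      rw [hR, hE]
      simp only [inner_neg_left, inner_add_left, inner_sub_left, real_inner_smul_left,
        hee, hskew0, hJL0]
      rw [hLhat (e i) (e i)]
      ring
    rw [Finset.sum_congr rfl fun i _ => hterm i]
    simp only [Finset.sum_neg_distrib, Finset.sum_add_distrib, Finset.sum_sub_distrib,
      ← Finset.mul_sum, kL, kLJ, kg, kgJ, hJJ, hLneg, inner_neg_left, htr]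
    simp only [hLhat]
    rw [hsym Z Y, hL Y Z]
    simp
    ring
  refine ⟨main, ?_⟩
  rw [hτ]
  simp only [main, hee, ← Finset.mul_sum, Finset.sum_add_distrib, hωω, hωJ]
  simp
  ring
end

section
/- Let V be a 2n-dimensional real inner product space with compatible complex structure J, and let α and ω be covectors on V with P the dual vector of ω. Suppose that for all X, Y, Z in V one has (1/(4(n+1))){2α(X)g(Y,Z) + α(Y)g(X,Z) + α(Z)g(X,Y) + α(JY)g(X,JZ) + α(JZ)g(X,JY)} = 2(n+2) ω(P) {2ω(X)g(Y,Z) + ω(Y)g(X,Z) + ω(Z)g(X,Y) + ω(JY)g(X,JZ) + ω(JZ)g(X,JY)}. Then α = 8(n+1)(n+2) ω(P) · ω; equivalently, setting τ := −4(n+1)(n+2) ω(P), one has α = −2τ ω and ‖α‖² = −τ³/((n+1)(n+2)). -/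
open RealInnerProductSpace

/-- Pointwise comparison of the Bochner–Kähler identity for `∇ρ` with the
expression obtained from a flat complex conformal connection: the hypothesis forces
`α = 8(n+1)(n+2)ω(P)·ω`; equivalently, with `τ = −4(n+1)(n+2)ω(P)`, `α = −2τω` and
`‖α‖² = −τ³/((n+1)(n+2))`. -/
theorem alpha_determined
    (n : ℕ) (hn : 1 ≤ n)
    {V : Type*} [NormedAddCommGroup V] [InnerProductSpace ℝ V] [FiniteDimensional ℝ V]
    (hdim : Module.finrank ℝ V = 2 * n)
    (J : V →ₗ[ℝ] V)
    (hJiso : ∀ X Y : V, ⟪J X, J Y⟫ = ⟪X, Y⟫)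
    (hJJ : ∀ X : V, J (J X) = -X)
    (α ω : V →ₗ[ℝ] ℝ) (P : V) (hP : ∀ X : V, ⟪P, X⟫ = ω X)
    (e : OrthonormalBasis (Fin (2 * n)) ℝ V)
    (h : ∀ X Y Z : V,
      (1 / (4 * ((n : ℝ) + 1))) *
        (2 * α X * ⟪Y, Z⟫ + α Y * ⟪X, Z⟫ + α Z * ⟪X, Y⟫
          + α (J Y) * ⟪X, J Z⟫ + α (J Z) * ⟪X, J Y⟫) =
      2 * ((n : ℝ) + 2) * ω P *
        (2 * ω X * ⟪Y, Z⟫ + ω Y * ⟪X, Z⟫ + ω Z * ⟪X, Y⟫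
          + ω (J Y) * ⟪X, J Z⟫ + ω (J Z) * ⟪X, J Y⟫)) :
    (∀ X : V, α X = 8 * ((n : ℝ) + 1) * ((n : ℝ) + 2) * ω P * ω X)
    ∧ (∀ τ : ℝ, τ = -4 * ((n : ℝ) + 1) * ((n : ℝ) + 2) * ω P →
        (∀ X : V, α X = -2 * τ * ω X)
        ∧ ∑ i, (α (e i)) ^ 2 = -τ ^ 3 / (((n : ℝ) + 1) * ((n : ℝ) + 2))) := by
  have hn1 : (n : ℝ) + 1 ≠ 0 := by positivity
  have hn2 : (n : ℝ) + 2 ≠ 0 := by positivity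
  have h0 : ∀ X : V, ⟪X, J X⟫ = 0 := by
    intro X
    have h1 := hJiso X (J X)
    rw [hJJ, inner_neg_right, real_inner_comm] at h1
    linarith
  have hα : ∀ X : V, α X = 8 * ((n : ℝ) + 1) * ((n : ℝ) + 2) * ω P * ω X := by
    intro X
    by_cases hX : X = 0
    · simp [hX]
    have hXX : ⟪X, X⟫ ≠ 0 := inner_self_ne_zero.mpr hX
    have h1 := h X X X
    rw [h0] at h1
    field_simp at h1
    apply mul_right_cancel₀ hXX
    linear_combination ((1 : ℝ) / 4) * h1
  have hsum : ∑ i, (ω (e i)) ^ 2 = ω P := by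
    have h1 := e.sum_sq_inner_left P
    simp only [hP] at h1
    rw [h1, ← hP, real_inner_self_eq_norm_sq]
  refine ⟨hα, ?_⟩
  intro τ hτ
  have hα2 : ∀ X : V, α X = -2 * τ * ω X := by
    intro X
    rw [hα, hτ]
    ring
  refine ⟨hα2, ?_⟩
  simp only [hα2, mul_pow]
  rw [← Finset.mul_sum, hsum, eq_div_iff (mul_ne_zero hn1 hn2)]
  linear_combination (τ ^ 2) * hτ
end

section
/- Let V be a 2n-dimensional real inner product space with compatible complex structure J, let τ < 0 be a real number, and let ω be a covector on V with ‖ω‖² = −τ/(4(n+1)(n+2)). Define the symmetric bilinear forms S(X,Y) := −2ω(JX)ω(JY) − ‖ω‖² g(X,Y) and H := 4τ ω⊗ω − 2τ S. Then tr_g H := Σ_i H(e_i,e_i) = −τ²/(n+1) for any orthonormal basis (e_i) of V. -/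
open RealInnerProductSpace

/-- With `τ < 0`, `‖ω‖² = −τ/(4(n+1)(n+2))`,
`S(X,Y) = −2ω(JX)ω(JY) − ‖ω‖²g(X,Y)` and `H = 4τ ω⊗ω − 2τ S`, one has
`tr_g H = −τ²/(n+1)` (the Laplacian identity `Δτ = −τ²/(n+1)`). -/
theorem trace_H_eq
    (n : ℕ) (hn : 1 ≤ n)
    {V : Type*} [NormedAddCommGroup V] [InnerProductSpace ℝ V] [FiniteDimensional ℝ V]
    (hdim : Module.finrank ℝ V = 2 * n)
    (J : V →ₗ[ℝ] V)
    (hJiso : ∀ X Y : V, ⟪J X, J Y⟫ = ⟪X, Y⟫)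
    (hJJ : ∀ X : V, J (J X) = -X)
    (τ : ℝ) (hτneg : τ < 0)
    (ω : V →ₗ[ℝ] ℝ) (P : V) (hP : ∀ X : V, ⟪P, X⟫ = ω X)
    (hnorm : ω P = -τ / (4 * ((n : ℝ) + 1) * ((n : ℝ) + 2)))
    (S : V → V → ℝ)
    (hS : ∀ X Y : V, S X Y = -2 * ω (J X) * ω (J Y) - ω P * ⟪X, Y⟫)
    (H : V → V → ℝ)
    (hH : ∀ X Y : V, H X Y = 4 * τ * ω X * ω Y - 2 * τ * S X Y)
    (e : OrthonormalBasis (Fin (2 * n)) ℝ V) :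
    ∑ i, H (e i) (e i) = -τ ^ 2 / ((n : ℝ) + 1) := by
  have key : ∀ Q : V, ∑ i, ⟪Q, e i⟫ * ⟪Q, e i⟫ = ⟪Q, Q⟫ := by
    intro Q
    rw [← e.sum_inner_mul_inner Q Q]
    refine Finset.sum_congr rfl fun i _ => ?_
    rw [real_inner_comm Q (e i)]
  have hJω : ∀ X : V, ω (J X) = -⟪J P, X⟫ := by
    intro X
    rw [← hP, ← hJiso P (J X), hJJ, inner_neg_right]
  have h1 : ∑ i, ω (e i) * ω (e i) = ω P := by
    rw [← hP P, ← key P]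
    simp only [hP]
  have h2 : ∑ i, ω (J (e i)) * ω (J (e i)) = ω P := by
    rw [← hP P, ← hJiso P P, ← key (J P)]
    simp only [hJω, neg_mul_neg]
  have h3 : ∀ i, H (e i) (e i) = 4 * τ * (ω (e i) * ω (e i))
      + 4 * τ * (ω (J (e i)) * ω (J (e i))) + 2 * τ * ω P := by
    intro i
    have h4 : ⟪e i, e i⟫ = (1 : ℝ) := by
      rw [real_inner_self_eq_norm_sq, e.norm_eq_one]; norm_num
    rw [hH, hS, h4]; ring
  simp only [h3, Finset.sum_add_distrib, ← Finset.mul_sum, h1, h2, Finset.sum_const,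
    Finset.card_univ, Fintype.card_fin, nsmul_eq_mul]
  rw [hnorm]
  push_cast
  have a1 : (n : ℝ) + 1 ≠ 0 := by positivity
  have a2 : (n : ℝ) + 2 ≠ 0 := by positivity
  field_simp
  ring
end
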